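/- arXiv:1501.05705 — 4 statements merged into one kernel-verified Lean document; each statement's English description precedes it below -/
import Mathlib

section
/- Let X be a pseudometric space with distance dist, let ξ : ℝ → X → X, let t₀ ≤ t_end be real numbers, let A ⊆ X, and let x₀, x̃₀ ∈ X. Assume that for every t ∈ [t₀, t_end], dist(ξ t x₀, ξ t x̃₀) ≤ dist(ξ t₀ x₀, ξ t₀ x̃₀). If dist(ξ t₀ x₀, ξ t₀ x̃₀) < ⨅_{t ∈ [t₀, t_end]} infDist(ξ t x₀, A), then for every t ∈ [t₀, t_end] one has ξ t x̃₀ ∉ A. -/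
open Metric Set

/-- Eq. (3): any trajectory started within distance γ_a of the nominal initial state
avoids the avoided set `A` throughout the horizon. -/
theorem robust_neighborhood_avoids {X : Type*} [PseudoMetricSpace X]
    (ξ : ℝ → X → X) (t₀ t_end : ℝ) (ht : t₀ ≤ t_end) (A : Set X) (x₀ x₀' : X)
    (hbisim : ∀ t ∈ Icc t₀ t_end,
      dist (ξ t x₀) (ξ t x₀') ≤ dist (ξ t₀ x₀) (ξ t₀ x₀'))
    (hlt : dist (ξ t₀ x₀) (ξ t₀ x₀') < ⨅ t : Icc t₀ t_end, infDist (ξ t x₀) A) :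
    ∀ t ∈ Icc t₀ t_end, ξ t x₀' ∉ A := by
  intro t htI hmem
  have hbdd : BddBelow (range fun s : Icc t₀ t_end => infDist (ξ s x₀) A) :=
    ⟨0, by rintro _ ⟨s, rfl⟩; exact infDist_nonneg⟩
  exact absurd hlt (not_lt.mpr
    ((ciInf_le hbdd ⟨t, htI⟩).trans ((infDist_le_dist_of_mem hmem).trans (hbisim t htI))))
end

section
/- Let X be a pseudometric space with distance dist, let ξ : ℝ → X → X, let t₀ ≤ t_end be real numbers, let A ⊆ X, and let x₀, x̃₀ ∈ X. Assume that for every t ∈ [t₀, t_end], dist(ξ t x₀, ξ t x̃₀) ≤ dist(ξ t₀ x₀, ξ t₀ x̃₀). If there exists t₁ ∈ [t₀, t_end] such that ξ t₁ x₀ belongs to the closure of A, then dist(ξ t₀ x₀, ξ t₀ x̃₀) ≥ ⨅_{t ∈ [t₀, t_end]} infDist(ξ t x̃₀, A). -/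
open Metric Set

/-- The initial state of a critical trajectory cannot be covered by the robust
neighborhood of any other initial state. -/
theorem critical_not_covered {X : Type*} [PseudoMetricSpace X]
    (ξ : ℝ → X → X) (t₀ t_end : ℝ) (ht : t₀ ≤ t_end) (A : Set X) (x₀ x₀' : X)
    (hbisim : ∀ t ∈ Icc t₀ t_end,
      dist (ξ t x₀) (ξ t x₀') ≤ dist (ξ t₀ x₀) (ξ t₀ x₀'))
    (hcrit : ∃ t₁ ∈ Icc t₀ t_end, ξ t₁ x₀ ∈ closure A) :
    dist (ξ t₀ x₀) (ξ t₀ x₀') ≥ ⨅ t : Icc t₀ t_end, infDist (ξ t x₀') A := by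
  obtain ⟨t₁, ht₁, hA⟩ := hcrit
  -- Distances to `A` are nonnegative, so the real infimum is a genuine lower bound.
  have hbdd : BddBelow (range fun t : Icc t₀ t_end => infDist (ξ t x₀') A) :=
    ⟨0, by rintro _ ⟨t, rfl⟩; exact infDist_nonneg⟩
  calc ⨅ t : Icc t₀ t_end, infDist (ξ t x₀') A
      ≤ infDist (ξ t₁ x₀') A := ciInf_le hbdd ⟨t₁, ht₁⟩
    _ = infDist (ξ t₁ x₀') (closure A) := infDist_closure.symm
    _ ≤ dist (ξ t₁ x₀') (ξ t₁ x₀) := infDist_le_dist_of_mem hA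
    _ = dist (ξ t₁ x₀) (ξ t₁ x₀') := dist_comm _ _
    _ ≤ dist (ξ t₀ x₀) (ξ t₀ x₀') := hbisim t₁ ht₁
end

section
/- Let X be a pseudometric space with distance dist, let ξ : ℝ → X → X, let t₀ ≤ t_end and t₁ ≤ t₂ be real numbers, let G̊ ⊆ G ⊆ X, and let x₀, x̃₀ ∈ X. Assume that for every t ∈ [t₀, t_end], dist(ξ t x₀, ξ t x̃₀) ≤ dist(ξ t₀ x₀, ξ t₀ x̃₀). If dist(ξ t₀ x₀, ξ t₀ x̃₀) < min( ⨅_{t ∈ [t₀, t_end] \ [t₁, t₂]} infDist(ξ t x₀, G), ⨅_{t ∈ [t₀, t_end] ∩ [t₁, t₂]} infDist(ξ t x₀, G̊) ), and both index sets [t₀, t_end] \ [t₁, t₂] and [t₀, t_end] ∩ [t₁, t₂] are nonempty, then for every t ∈ [t₀, t_end] \ [t₁, t₂] one has ξ t x̃₀ ∉ G, and for every t ∈ [t₀, t_end] ∩ [t₁, t₂] one has ξ t x̃₀ ∉ G̊. -/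
open Metric Set

/-- Eq. (7): the avoidance property of the basic safe neighborhood computation.
Trajectories from the ball avoid the whole active guard `G` outside the time window
`[t₁, t₂]`, and avoid the shrunk guard `G̊` during the time window. -/
theorem safe_neighborhood_avoids {X : Type*} [PseudoMetricSpace X]
    (ξ : ℝ → X → X) (t₀ t_end t₁ t₂ : ℝ) (ht : t₀ ≤ t_end) (ht' : t₁ ≤ t₂)
    (G' G : Set X) (hGG : G' ⊆ G) (x₀ x₀' : X)
    (hbisim : ∀ t ∈ Icc t₀ t_end,
      dist (ξ t x₀) (ξ t x₀') ≤ dist (ξ t₀ x₀) (ξ t₀ x₀'))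
    (hne₁ : (Icc t₀ t_end \ Icc t₁ t₂).Nonempty)
    (hne₂ : (Icc t₀ t_end ∩ Icc t₁ t₂).Nonempty)
    (hlt : dist (ξ t₀ x₀) (ξ t₀ x₀') <
      min (⨅ t : ↥(Icc t₀ t_end \ Icc t₁ t₂), infDist (ξ t x₀) G)
          (⨅ t : ↥(Icc t₀ t_end ∩ Icc t₁ t₂), infDist (ξ t x₀) G')) :
    (∀ t ∈ Icc t₀ t_end \ Icc t₁ t₂, ξ t x₀' ∉ G) ∧
    (∀ t ∈ Icc t₀ t_end ∩ Icc t₁ t₂, ξ t x₀' ∉ G') := by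
  -- The distances are bounded below by `0`, so `⨅` is a genuine infimum and lies below each value.
  have inf_le (A : Set X) (T : Set ℝ) {t : ℝ} (h : t ∈ T) :
      (⨅ s : ↥T, infDist (ξ s x₀) A) ≤ infDist (ξ t x₀) A :=
    ciInf_le ⟨0, by rintro _ ⟨s, rfl⟩; exact infDist_nonneg⟩ (⟨t, h⟩ : ↥T)
  -- A trajectory inside `A` at time `t` would be at distance at least `infDist (ξ t x₀) A`
  -- from `ξ t x₀`, while the bisimulation bound keeps it strictly closer.
  have avoid (A : Set X) (T : Set ℝ) (hT : T ⊆ Icc t₀ t_end)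
      (h : dist (ξ t₀ x₀) (ξ t₀ x₀') < ⨅ s : ↥T, infDist (ξ s x₀) A) :
      ∀ t ∈ T, ξ t x₀' ∉ A := fun t htT hA =>
    (((h.trans_le (inf_le A T htT)).trans_le (infDist_le_dist_of_mem hA)).trans_le
      (hbisim t (hT htT))).false
  obtain ⟨h₁, h₂⟩ := lt_min_iff.mp hlt
  exact ⟨avoid G _ sdiff_subset h₁, avoid G' _ inter_subset_left h₂⟩
end

section
/- Let X be a pseudometric space with distance dist, let ξ : ℝ → X → X, let t_end be a real number and τ ≥ 0, let Inv ⊆ X, let x₀, x̃₀ ∈ X, and let c be a real number. Assume that for every t ∈ [t_end, t_end + τ], dist(ξ t x₀, ξ t x̃₀) ≤ c, and that c < ⨆_{t ∈ [t_end, t_end + τ]} infDist(ξ t x₀, Inv). Then there exists t ∈ [t_end, t_end + τ] such that ξ t x̃₀ ∉ Inv. -/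
open Metric Set

/-- Correctness of the Shrinking subroutine: any trajectory started within
distance `c < sup_t infDist(ξ t x₀, Inv)` of the nominal one leaves the
invariant set before `t_end + τ`. -/
theorem shrinking_leaves_invariant {X : Type*} [PseudoMetricSpace X]
    (ξ : ℝ → X → X) (t_end τ : ℝ) (hτ : 0 ≤ τ) (Inv : Set X) (x₀ x₀' : X)
    (c : ℝ)
    (hbisim : ∀ t ∈ Icc t_end (t_end + τ), dist (ξ t x₀) (ξ t x₀') ≤ c)
    (hlt : c < ⨆ t : ↥(Icc t_end (t_end + τ)), infDist (ξ t x₀) Inv) :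
    ∃ t ∈ Icc t_end (t_end + τ), ξ t x₀' ∉ Inv := by
  have : Nonempty ↥(Icc t_end (t_end + τ)) := ⟨⟨t_end, by simpa using hτ⟩⟩
  -- No boundedness is needed: at some time the nominal state is already farther than `c` from `Inv`.
  obtain ⟨t, ht⟩ := exists_lt_of_lt_ciSup hlt
  refine ⟨t, t.2, fun hmem => ?_⟩
  exact absurd ((infDist_le_dist_of_mem hmem).trans (hbisim t t.2)) (not_le.mpr ht)
end
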